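/- arXiv:0803.3789 — 3 statements merged into one kernel-verified Lean document; each statement's English description precedes it below -/
import Mathlib

section
/- Let n ≥ 1 and m ≥ 2 be integers and set p = 2m + n − 3 and q = m + n − 2. Let f : ℝ → ℝ be twice differentiable on (0,∞) with f'(r) > 0 for all r > 0, suppose f''(r) + p·f'(r)/r − q·(f'(r))² > 0 for all r > 0, and suppose exp(−q·f(r)) → 0 as r → ∞. Then for every a > 0 there exists a constant K such that f(s) ≤ K + ((p−1)/q)·log s for all s > a. -/
/-!
Put `u = exp (-q f)`. The differential inequality for `f` says that `u'' + (p / r) u' ≤ 0`, that is,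
`r ^ p u'` is nonincreasing. Hence `u' r ≤ (s ^ p u' s) / r ^ p` for `r ≥ s`, and integrating from
`s` to `∞`, where `u` vanishes, gives `0 ≤ (p - 1) u s + s u' s`. Dividing by `u s` turns this into
`f' s ≤ ((p - 1) / q) / s`, so `f - ((p - 1) / q) log` is nonincreasing.
-/

open Filter Set Topology

theorem antitoneOn_of_hasDerivAt_nonpos {D : Set ℝ} (hD : Convex ℝ D) {u u' : ℝ → ℝ}
    (hu : ∀ r ∈ D, HasDerivAt u (u' r) r) (hu' : ∀ r ∈ D, u' r ≤ 0) : AntitoneOn u D :=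
  antitoneOn_of_hasDerivWithinAt_nonpos hD
    (fun r hr ↦ (hu r hr).continuousAt.continuousWithinAt)
    (fun r hr ↦ (hu r (interior_subset hr)).hasDerivWithinAt)
    fun r hr ↦ hu' r (interior_subset hr)

theorem le_of_hasDerivAt_le_of_tendsto_atTop {u u' v v' : ℝ → ℝ} {s l : ℝ}
    (hu : ∀ r, s ≤ r → HasDerivAt u (u' r) r) (hv : ∀ r, s ≤ r → HasDerivAt v (v' r) r)
    (hle : ∀ r, s ≤ r → u' r ≤ v' r)
    (hul : Tendsto u atTop (𝓝 l)) (hvl : Tendsto v atTop (𝓝 l)) : v s ≤ u s := by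
  have hanti : AntitoneOn (fun r ↦ u r - v r) (Ici s) :=
    antitoneOn_of_hasDerivAt_nonpos (convex_Ici s) (fun r hr ↦ (hu r hr).sub (hv r hr))
      fun r hr ↦ sub_nonpos.2 (hle r hr)
  have hlim : Tendsto (fun r ↦ u r - v r) atTop (𝓝 0) := by simpa using hul.sub hvl
  refine sub_nonneg.1 (le_of_tendsto hlim ?_)
  filter_upwards [eventually_ge_atTop s] with r hr using hanti self_mem_Ici hr hr

theorem antitoneOn_rpow_mul_of_deriv_add_nonpos {a p : ℝ} {v v' : ℝ → ℝ} (ha : 0 ≤ a)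
    (hv : ∀ r, a < r → HasDerivAt v (v' r) r) (hle : ∀ r, a < r → v' r + p * v r / r ≤ 0) :
    AntitoneOn (fun r ↦ r ^ p * v r) (Ioi a) := by
  have hderiv : ∀ r ∈ Ioi a,
      HasDerivAt (fun r ↦ r ^ p * v r) (r ^ p * (v' r + p * v r / r)) r := by
    intro r hr
    have hr₀ : r ≠ 0 := (ha.trans_lt hr).ne'
    refine ((Real.hasDerivAt_rpow_const (.inl hr₀)).mul (hv r hr)).congr_deriv ?_
    rw [Real.rpow_sub_one hr₀]
    ring
  exact antitoneOn_of_hasDerivAt_nonpos (convex_Ioi a) hderiv fun r hr ↦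
    mul_nonpos_of_nonneg_of_nonpos (Real.rpow_nonneg (ha.trans hr.le) p) (hle r hr)

theorem sub_one_mul_sub_add_mul_deriv_nonneg {a p l : ℝ} {u u' u'' : ℝ → ℝ}
    (hp : 1 < p) (ha : 0 ≤ a)
    (hu : ∀ r, a < r → HasDerivAt u (u' r) r) (hu' : ∀ r, a < r → HasDerivAt u' (u'' r) r)
    (hle : ∀ r, a < r → u'' r + p * u' r / r ≤ 0) (hlim : Tendsto u atTop (𝓝 l))
    {s : ℝ} (hs : a < s) : 0 ≤ (p - 1) * (u s - l) + s * u' s := by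
  have hs₀ : 0 < s := ha.trans_lt hs
  have hp₁ : 0 < p - 1 := sub_pos.2 hp
  set C := s ^ p * u' s with hC
  have hu'_le : ∀ r, s ≤ r → u' r ≤ C * r ^ (-p) := by
    intro r hr
    have hr₀ : 0 < r := hs₀.trans_le hr
    rw [Real.rpow_neg hr₀.le, ← div_eq_mul_inv, le_div_iff₀' (Real.rpow_pos_of_pos hr₀ p)]
    exact antitoneOn_rpow_mul_of_deriv_add_nonpos ha hu' hle hs (hs.trans_le hr) hr
  have hprim : ∀ r, s ≤ r →
      HasDerivAt (fun r ↦ l - C / (p - 1) * r ^ (-(p - 1))) (C * r ^ (-p)) r := by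
    intro r hr
    have hr₀ : r ≠ 0 := (hs₀.trans_le hr).ne'
    refine (((Real.hasDerivAt_rpow_const (.inl hr₀)).const_mul _).const_sub l).congr_deriv ?_
    rw [show -(p - 1) - 1 = -p by ring]
    field_simp
  have hprim_lim : Tendsto (fun r ↦ l - C / (p - 1) * r ^ (-(p - 1))) atTop (𝓝 l) := by
    simpa using ((tendsto_rpow_neg_atTop hp₁).const_mul (C / (p - 1))).const_sub l
  have hle_u : l - C / (p - 1) * s ^ (-(p - 1)) ≤ u s :=
    le_of_hasDerivAt_le_of_tendsto_atTop (fun r hr ↦ hu r (hs.trans_le hr)) hprim hu'_le hlim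
      hprim_lim
  have hC_mul : C * s ^ (-(p - 1)) = s * u' s := by
    rw [hC, mul_right_comm, ← Real.rpow_add hs₀, show p + -(p - 1) = 1 by ring, Real.rpow_one]
  rw [div_mul_eq_mul_div, hC_mul, sub_le_comm, le_div_iff₀' hp₁] at hle_u
  linarith

section LogBound

variable {a p q : ℝ} {f f' f'' : ℝ → ℝ}

theorem mul_deriv_le_of_tendsto_exp_neg_mul (hp : 1 < p) (hq : 0 < q) (ha : 0 ≤ a)
    (hf : ∀ r, a < r → HasDerivAt f (f' r) r) (hf' : ∀ r, a < r → HasDerivAt f' (f'' r) r)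
    (hineq : ∀ r, a < r → 0 ≤ f'' r + p * f' r / r - q * f' r ^ 2)
    (hlim : Tendsto (fun r ↦ Real.exp (-q * f r)) atTop (𝓝 0)) {s : ℝ} (hs : a < s) :
    s * f' s ≤ (p - 1) / q := by
  set u : ℝ → ℝ := fun r ↦ Real.exp (-q * f r)
  have hu : ∀ r, a < r → HasDerivAt u (u r * (-q * f' r)) r := fun r hr ↦
    ((hf r hr).const_mul (-q)).exp
  have hu' : ∀ r, a < r → HasDerivAt (fun r ↦ u r * (-q * f' r))
      (u r * (-q * f' r) * (-q * f' r) + u r * (-q * f'' r)) r := fun r hr ↦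
    (hu r hr).mul ((hf' r hr).const_mul (-q))
  have hsuper : ∀ r, a < r →
      u r * (-q * f' r) * (-q * f' r) + u r * (-q * f'' r) + p * (u r * (-q * f' r)) / r ≤ 0 := by
    intro r hr
    calc
      _ = -(q * u r * (f'' r + p * f' r / r - q * f' r ^ 2)) := by ring
      _ ≤ 0 := neg_nonpos.2 (mul_nonneg (mul_pos hq (Real.exp_pos _)).le (hineq r hr))
  have hnonneg : 0 ≤ u s * (p - 1 - q * (s * f' s)) := by
    convert sub_one_mul_sub_add_mul_deriv_nonneg hp ha hu hu' hsuper hlim hs using 1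
    ring
  rw [le_div_iff₀' hq]
  exact sub_nonneg.1 (nonneg_of_mul_nonneg_right hnonneg (Real.exp_pos _))

theorem log_upper_bound_general (hp : 1 < p) (hq : 0 < q) (ha : 0 ≤ a)
    (hf : ∀ r, a < r → HasDerivAt f (f' r) r) (hf' : ∀ r, a < r → HasDerivAt f' (f'' r) r)
    (hineq : ∀ r, a < r → 0 ≤ f'' r + p * f' r / r - q * f' r ^ 2)
    (hlim : Tendsto (fun r ↦ Real.exp (-q * f r)) atTop (𝓝 0)) :
    AntitoneOn (fun r ↦ f r - (p - 1) / q * Real.log r) (Ioi a) := by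
  refine antitoneOn_of_hasDerivAt_nonpos (u' := fun r ↦ f' r - (p - 1) / q * r⁻¹) (convex_Ioi a)
    (fun r hr ↦ (hf r hr).sub ((Real.hasDerivAt_log (ha.trans_lt hr).ne').const_mul _))
    fun r hr ↦ ?_
  rw [sub_nonpos, ← div_eq_mul_inv, le_div_iff₀' (ha.trans_lt hr)]
  exact mul_deriv_le_of_tendsto_exp_neg_mul hp hq ha hf hf' hineq hlim hr

end LogBound

/-- Logarithmic upper bound (inequality (20) of Theorem 2's proof): for integers
`n ≥ 1`, `m ≥ 2`, with `p = 2m+n-3`, `q = m+n-2`, if `f` is twice differentiable on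
`(0,∞)` with `f' > 0` there, `f'' r + p f' r / r - q (f' r)^2 > 0` for all `r > 0`,
and `exp (-q * f r) → 0` as `r → ∞`, then for every `a > 0` there is a constant `K`
with `f s ≤ K + ((p-1)/q) * log s` for all `s > a`. -/
theorem log_upper_bound (n m : ℕ) (hn : 1 ≤ n) (hm : 2 ≤ m) (f : ℝ → ℝ)
    (hdiff : ∀ r : ℝ, 0 < r → DifferentiableAt ℝ f r)
    (hdiff2 : ∀ r : ℝ, 0 < r → DifferentiableAt ℝ (deriv f) r)
    (hpos : ∀ r : ℝ, 0 < r → 0 < deriv f r)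
    (hineq : ∀ r : ℝ, 0 < r →
      0 < deriv (deriv f) r + (2 * (m : ℝ) + n - 3) * deriv f r / r
          - ((m : ℝ) + n - 2) * (deriv f r) ^ 2)
    (hlim : Filter.Tendsto (fun r : ℝ => Real.exp (-((m : ℝ) + n - 2) * f r))
      Filter.atTop (nhds 0)) :
    ∀ a : ℝ, 0 < a → ∃ K : ℝ, ∀ s : ℝ, a < s →
      f s ≤ K + ((2 * (m : ℝ) + n - 3 - 1) / ((m : ℝ) + n - 2)) * Real.log s := by
  have hn' : (1 : ℝ) ≤ n := by exact_mod_cast hn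
  have hm' : (2 : ℝ) ≤ m := by exact_mod_cast hm
  have hanti := log_upper_bound_general (by linarith) (by linarith) le_rfl
    (fun r hr ↦ (hdiff r hr).hasDerivAt) (fun r hr ↦ (hdiff2 r hr).hasDerivAt)
    (fun r hr ↦ (hineq r hr).le) hlim
  exact fun a ha ↦ ⟨_, fun s hs ↦ sub_le_iff_le_add.1 (hanti ha (ha.trans hs) hs.le)⟩
end

section
/- Let n ≥ 1 and m ≥ 2 be integers and set m₀ = (m−1)/(n+m−1). Let f : ℝ → ℝ be twice differentiable on (0,∞) with f'(r) > 0 for all r > 0, and suppose (n+m−1)·f''(r) + (m−1)·f'(r)/r > 0 for all r > 0. Then there exist constants c₁ > 0 and c₂ ∈ ℝ and some b > 0 such that f(r) > c₁·r^{1−m₀} + c₂ for all r > b. Note that 1 − m₀ = n/(n+m−1). -/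
/-!
With `k = (m-1)/(n+m-1)`, the hypothesis reads `f'' + k f'/r > 0`, and `r ^ k` is an integrating
factor: the derivative of `f' r * r ^ k` is `(f'' + k f'/r) * r ^ k`. Hence `f' r * r ^ k` stays
above its value `c` at the starting point, that is, `f' r ≥ c * r ^ (-k)`, and integrating this
bound gives growth of order `r ^ (1 - k)`.
-/

open Set

section

variable {s : Set ℝ} {a c k : ℝ} {f f' f'' g g' : ℝ → ℝ}

theorem monotoneOn_mul_rpow (hs : Convex ℝ s) (hs₀ : s ⊆ Ioi 0)
    (hg : ∀ x ∈ s, HasDerivWithinAt g (g' x) s x)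
    (hgg' : ∀ x ∈ interior s, 0 ≤ g' x + k * g x / x) :
    MonotoneOn (fun x ↦ g x * x ^ k) s := by
  have hderiv : ∀ x ∈ s, HasDerivWithinAt (fun x ↦ g x * x ^ k)
      ((g' x + k * g x / x) * x ^ k) s x := fun x hx ↦ by
    have hx₀ : x ≠ 0 := (hs₀ hx).ne'
    have hrpow := Real.hasDerivAt_rpow_const (p := k) (.inl hx₀)
    refine ((hg x hx).mul hrpow.hasDerivWithinAt).congr_deriv ?_
    rw [Real.rpow_sub_one hx₀]
    ring
  refine monotoneOn_of_hasDerivWithinAt_nonneg hs (fun x hx ↦ (hderiv x hx).continuousWithinAt)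
    (fun x hx ↦ (hderiv x (interior_subset hx)).mono interior_subset) fun x hx ↦ ?_
  exact mul_nonneg (hgg' x hx) (Real.rpow_nonneg (hs₀ (interior_subset hx)).le k)

theorem monotoneOn_sub_const_mul_rpow (hs : Convex ℝ s) (hs₀ : s ⊆ Ioi 0) (hk : k ≠ 1)
    (hf : ∀ x ∈ s, HasDerivWithinAt f (f' x) s x) (hc : ∀ x ∈ interior s, c ≤ f' x * x ^ k) :
    MonotoneOn (fun x ↦ f x - c / (1 - k) * x ^ (1 - k)) s := by
  have hderiv : ∀ x ∈ s, HasDerivWithinAt (fun x ↦ f x - c / (1 - k) * x ^ (1 - k))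
      (f' x - c / x ^ k) s x := fun x hx ↦ by
    have hx₀ : 0 < x := hs₀ hx
    have hk' : 1 - k ≠ 0 := sub_ne_zero.mpr hk.symm
    have hrpow := (Real.hasDerivAt_rpow_const (p := 1 - k) (.inl hx₀.ne')).const_mul (c / (1 - k))
    refine ((hf x hx).sub hrpow.hasDerivWithinAt).congr_deriv ?_
    rw [sub_sub_cancel_left, Real.rpow_neg hx₀.le, ← mul_assoc, div_mul_cancel₀ _ hk',
      div_eq_mul_inv]
  refine monotoneOn_of_hasDerivWithinAt_nonneg hs (fun x hx ↦ (hderiv x hx).continuousWithinAt)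
    (fun x hx ↦ (hderiv x (interior_subset hx)).mono interior_subset) fun x hx ↦ ?_
  have hx₀ : 0 < x := hs₀ (interior_subset hx)
  exact sub_nonneg.mpr ((div_le_iff₀ (Real.rpow_pos_of_pos hx₀ k)).mpr (hc x hx))

theorem add_const_mul_rpow_sub_rpow_le (ha : 0 < a) (hk : k ≠ 1)
    (hf : ∀ r ∈ Ici a, HasDerivWithinAt f (f' r) (Ici a) r)
    (hf' : ∀ r ∈ Ici a, HasDerivWithinAt f' (f'' r) (Ici a) r)
    (hineq : ∀ r ∈ Ioi a, 0 ≤ f'' r + k * f' r / r) {r : ℝ} (hr : a ≤ r) :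
    f a + f' a * a ^ k / (1 - k) * (r ^ (1 - k) - a ^ (1 - k)) ≤ f r := by
  have hpos : Ici a ⊆ Ioi 0 := Ici_subset_Ioi.mpr ha
  have hmono : MonotoneOn (fun r ↦ f' r * r ^ k) (Ici a) :=
    monotoneOn_mul_rpow (convex_Ici a) hpos hf' (by rwa [interior_Ici])
  have hlower : ∀ x ∈ interior (Ici a), f' a * a ^ k ≤ f' x * x ^ k := fun x hx ↦
    hmono self_mem_Ici (interior_subset hx) (interior_subset hx)
  have hle : f a - f' a * a ^ k / (1 - k) * a ^ (1 - k) ≤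
      f r - f' a * a ^ k / (1 - k) * r ^ (1 - k) :=
    monotoneOn_sub_const_mul_rpow (convex_Ici a) hpos hk hf hlower self_mem_Ici hr hr
  linarith

theorem power_lower_bound_general {n m : ℝ} (hn : 0 < n) (hnm : 0 < n + m - 1) (ha : 0 < a)
    (hf : ∀ r ∈ Ici a, HasDerivWithinAt f (f' r) (Ici a) r)
    (hf' : ∀ r ∈ Ici a, HasDerivWithinAt f' (f'' r) (Ici a) r) (hpos : 0 < f' a)
    (hineq : ∀ r ∈ Ioi a, 0 ≤ (n + m - 1) * f'' r + (m - 1) * f' r / r) :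
    ∃ c₁ : ℝ, 0 < c₁ ∧ ∃ c₂ : ℝ, ∀ r ∈ Ici a,
      c₁ * r ^ (1 - (m - 1) / (n + m - 1)) + c₂ < f r := by
  set k := (m - 1) / (n + m - 1) with hk
  have hk₁ : k < 1 := (div_lt_one hnm).mpr (by linarith)
  have hineq' : ∀ r ∈ Ioi a, 0 ≤ f'' r + k * f' r / r := fun r hr ↦ by
    have hscale : f'' r + k * f' r / r =
        ((n + m - 1) * f'' r + (m - 1) * f' r / r) / (n + m - 1) := by
      rw [hk]
      field_simp
    exact hscale ▸ div_nonneg (hineq r hr) hnm.le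
  set c₁ := f' a * a ^ k / (1 - k)
  have hc₁ : 0 < c₁ := div_pos (mul_pos hpos (Real.rpow_pos_of_pos ha k)) (sub_pos.mpr hk₁)
  refine ⟨c₁, hc₁, f a - c₁ * a ^ (1 - k) - 1, fun r hr ↦ ?_⟩
  have hle : f a + c₁ * (r ^ (1 - k) - a ^ (1 - k)) ≤ f r :=
    add_const_mul_rpow_sub_rpow_le ha hk₁.ne hf hf' hineq' hr
  linarith

end

/-- Power-law lower bound (inequality (21) of Theorem 2's proof): for integers
`n ≥ 1`, `m ≥ 2`, with `m₀ = (m-1)/(n+m-1)`, if `f` is twice differentiable on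
`(0,∞)` with `f' > 0` there and `(n+m-1) f'' r + (m-1) f' r / r > 0` for all `r > 0`,
then there are `c₁ > 0`, `c₂ ∈ ℝ` and `b > 0` with `f r > c₁ * r ^ (1 - m₀) + c₂`
for all `r > b`. Note `1 - m₀ = n/(n+m-1)`. -/
theorem power_lower_bound (n m : ℕ) (hn : 1 ≤ n) (hm : 2 ≤ m) (f : ℝ → ℝ)
    (hdiff : ∀ r : ℝ, 0 < r → DifferentiableAt ℝ f r)
    (hdiff2 : ∀ r : ℝ, 0 < r → DifferentiableAt ℝ (deriv f) r)
    (hpos : ∀ r : ℝ, 0 < r → 0 < deriv f r)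
    (hineq : ∀ r : ℝ, 0 < r →
      0 < ((n : ℝ) + m - 1) * deriv (deriv f) r + ((m : ℝ) - 1) * deriv f r / r) :
    ∃ c₁ : ℝ, 0 < c₁ ∧ ∃ c₂ b : ℝ, 0 < b ∧ ∀ r : ℝ, b < r →
      c₁ * r ^ (1 - ((m : ℝ) - 1) / ((n : ℝ) + m - 1)) + c₂ < f r := by
  have hn₀ : (0 : ℝ) < n := by exact_mod_cast hn
  have hnm : (0 : ℝ) < n + m - 1 := by linarith [show (2 : ℝ) ≤ m by exact_mod_cast hm]
  obtain ⟨c₁, hc₁, c₂, h⟩ := power_lower_bound_general hn₀ hnm one_pos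
    (fun r hr ↦ (hdiff r (one_pos.trans_le hr)).hasDerivAt.hasDerivWithinAt)
    (fun r hr ↦ (hdiff2 r (one_pos.trans_le hr)).hasDerivAt.hasDerivWithinAt)
    (hpos 1 one_pos) fun r hr ↦ (hineq r (one_pos.trans hr)).le
  exact ⟨c₁, hc₁, c₂, 1, one_pos, fun r hr ↦ h r hr.le⟩
end

section
/- Let m ≥ 2 be an integer and let v : ℝ^m → ℝ be three times continuously differentiable. Suppose there is a function p : ℝ^m → ℝ such that for all t ∈ ℝ^m and all indices 1 ≤ i, j ≤ m, the second partial derivatives satisfy ∂ᵢ∂ⱼ v(t) = p(t)·δᵢⱼ, where δᵢⱼ is the Kronecker delta. Then p is a constant function. -/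
/-!
If a differentiable map `g` has derivative `p x • L` with `L` a fixed nonzero linear map, then `g`
is constant along every direction `h` in the kernel of `L`. Hence `g` and its derivative are
invariant under translation by `h`, and so is `p`.

When `L` has rank at least two, an arbitrary direction `h` is reduced to this case by composing
with the quotient by the line spanned by `L h`: this kills `L h` but not all of `L`. For the Hessian
of `v`, take `g = fderiv ℝ v` and `L = innerSL ℝ`.
-/

theorem exists_apply_notMem_span_singleton_of_one_lt_rank {K V W : Type*} [DivisionRing K]
    [AddCommGroup V] [Module K V] [AddCommGroup W] [Module K W] {L : V →ₗ[K] W}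
    (hL : 1 < L.rank) (y : W) : ∃ x, L x ∉ Submodule.span K {y} := by
  by_contra! hmem
  have hrange : L.range ≤ Submodule.span K {y} := by
    rintro _ ⟨x, rfl⟩
    exact hmem x
  exact hL.not_ge ((rank_submodule_le_one_iff' _).2 ⟨y, hrange⟩)

section ProportionalDerivative

variable {𝕜 E F : Type*} [RCLike 𝕜] [NormedAddCommGroup E] [NormedSpace 𝕜 E]
  [NormedAddCommGroup F] [NormedSpace 𝕜 F] {g : E → F} {p : E → 𝕜} {L : E →L[𝕜] F} {h : E}

theorem apply_add_eq_of_fderiv_apply_eq_zero (hg : Differentiable 𝕜 g)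
    (hg' : ∀ x, fderiv 𝕜 g x h = 0) (x : E) : g (x + h) = g x := by
  have hline : ∀ s : 𝕜, HasDerivAt (fun s : 𝕜 ↦ g (x + s • h)) 0 s := fun s ↦ by
    have hs : HasDerivAt (fun s : 𝕜 ↦ x + s • h) h s := by
      simpa using ((hasDerivAt_id s).smul_const h).const_add x
    simpa only [hg', Function.comp_def] using (hg (x + s • h)).hasFDerivAt.comp_hasDerivAt s hs
  simpa using is_const_of_deriv_eq_zero (fun s ↦ (hline s).differentiableAt)
    (fun s ↦ (hline s).deriv) 1 0

theorem scalar_add_eq_of_hasFDerivAt_smul (hL : L ≠ 0) (hg : ∀ x, HasFDerivAt g (p x • L) x)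
    (hLh : L h = 0) (x : E) : p (x + h) = p x := by
  have hg_add : (fun y ↦ g (y + h)) = g :=
    funext <| apply_add_eq_of_fderiv_apply_eq_zero (fun y ↦ (hg y).differentiableAt)
      fun y ↦ by simp [(hg y).fderiv, hLh]
  have hg_shift : HasFDerivAt g (p (x + h) • L) x := by
    simpa only [hg_add] using (hasFDerivAt_comp_add_right h).2 (hg (x + h))
  exact smul_left_injective 𝕜 hL (hg_shift.unique (hg x))

theorem hessian_scalar_implies_const_general (hL : 1 < (L : E →ₗ[𝕜] F).rank)
    (hg : ∀ x, HasFDerivAt g (p x • L) x) (x y : E) : p x = p y := by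
  let line := Submodule.span 𝕜 {L (x - y)}
  have : IsClosed (line : Set F) := line.closed_of_finiteDimensional
  have hkill : (line.mkQL ∘L L) (x - y) = 0 :=
    (Submodule.Quotient.mk_eq_zero _).2 (Submodule.mem_span_singleton_self _)
  have hquot : ∀ z, HasFDerivAt (line.mkQL ∘ g) (p z • (line.mkQL ∘L L)) z := fun z ↦ by
    simpa only [ContinuousLinearMap.comp_smul] using line.mkQL.hasFDerivAt.comp z (hg z)
  have hne : line.mkQL ∘L L ≠ 0 := fun hzero ↦ by
    obtain ⟨w, hw⟩ := exists_apply_notMem_span_singleton_of_one_lt_rank hL (L (x - y))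
    exact hw ((Submodule.Quotient.mk_eq_zero _).1 (DFunLike.congr_fun hzero w))
  simpa only [add_sub_cancel] using scalar_add_eq_of_hasFDerivAt_smul hne hquot hkill y

end ProportionalDerivative

section Hessian

variable {E : Type*} [NormedAddCommGroup E] [InnerProductSpace ℝ E]

theorem rank_innerSL : (innerSL ℝ : E →L[ℝ] E →L[ℝ] ℝ).toLinearMap.rank = Module.rank ℝ E :=
  rank_range_of_injective _ fun _ _ ↦ innerSL_inj.1

theorem hasFDerivAt_smul_innerSL_of_partials {ι : Type*} [Fintype ι] [DecidableEq ι]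
    (b : OrthonormalBasis ι ℝ E) {G : E → E →L[ℝ] ℝ} {c : ℝ} {x : E} (hG : DifferentiableAt ℝ G x)
    (hpartial : ∀ i j, fderiv ℝ (fun y ↦ G y (b j)) x (b i) = c * if i = j then 1 else 0) :
    HasFDerivAt G (c • innerSL ℝ) x := by
  have hcoord : ∀ i j, fderiv ℝ G x (b i) (b j) = (c • innerSL ℝ (b i)) (b j) := fun i j ↦ by
    have heval : fderiv ℝ (fun y ↦ G y (b j)) x (b i) = fderiv ℝ G x (b i) (b j) := by
      rw [fderiv_clm_apply hG (differentiableAt_const _)]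
      simp
    rw [← heval, hpartial]
    simp [b.inner_eq_ite]
  have hfderiv : fderiv ℝ G x = c • innerSL ℝ := by
    refine ContinuousLinearMap.coe_injective (b.toBasis.ext fun i ↦ ?_)
    refine ContinuousLinearMap.coe_injective (b.toBasis.ext fun j ↦ ?_)
    rw [b.coe_toBasis]
    exact hcoord i j
  exact hfderiv ▸ hG.hasFDerivAt

end Hessian

/-- Equations (11)–(13) in the proof of Theorem 1: if `m ≥ 2` and the Euclidean Hessian
of `v : ℝ^m → ℝ` is pointwise the scalar multiple `p t` of the identity, then `p` is
constant. -/
theorem hessian_scalar_implies_const (m : ℕ) (hm : 2 ≤ m)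
    (v : EuclideanSpace ℝ (Fin m) → ℝ) (hv : ContDiff ℝ 3 v)
    (p : EuclideanSpace ℝ (Fin m) → ℝ)
    (hp : ∀ t : EuclideanSpace ℝ (Fin m), ∀ i j : Fin m,
      fderiv ℝ (fun y => fderiv ℝ v y (EuclideanSpace.single j 1)) t
          (EuclideanSpace.single i 1)
        = p t * (if i = j then 1 else 0)) :
    ∀ t t' : EuclideanSpace ℝ (Fin m), p t = p t' := by
  have hdiff : Differentiable ℝ (fderiv ℝ v) :=
    (hv.fderiv_right (m := 2) (by norm_num)).differentiable two_ne_zero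
  have hrank : 1 < Module.rank ℝ (EuclideanSpace ℝ (Fin m)) :=
    Module.one_lt_rank_of_one_lt_finrank ((finrank_euclideanSpace_fin (𝕜 := ℝ)).symm ▸ hm)
  exact hessian_scalar_implies_const_general (hrank.trans_eq rank_innerSL.symm) fun t ↦
    hasFDerivAt_smul_innerSL_of_partials (EuclideanSpace.basisFun (Fin m) ℝ) (hdiff t)
      (by simpa using hp t)
end
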